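/- For the so(m) rational R matrix and integers 0 ≤ m₁ with 2m₁ ≤ m, the diagonal matrix K(u) with k_i(u) = k_ī(u) = 1 for i ∈ {1,…,m₁} and k_i(u) = (1+cu)/(1−cu) for the remaining indices, where c = 2/(κ − (2m₁ − 1)) and 2κ = m−2, solves the reflection equation. -/

import Mathlib

namespace RefClass12

open Matrix

/-- The conjugate index `ī = m + 1 - i` (0-based: `m - 1 - i`). -/
def barso (m : ℕ) (i : Fin m) : Fin m := ⟨m - 1 - (i : ℕ), by have := i.isLt; omega⟩

/-- Kronecker (tensor) product of matrices on `ℂ^m ⊗ ℂ^m`. -/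
noncomputable def kron {m : ℕ} (A B : Matrix (Fin m) (Fin m) ℂ) :
    Matrix (Fin m × Fin m) (Fin m × Fin m) ℂ :=
  fun r c => A r.1 c.1 * B r.2 c.2

/-- The permutation operator `P = Σ_{i,j} E_{ij} ⊗ E_{ji}`. -/
noncomputable def Pm (m : ℕ) : Matrix (Fin m × Fin m) (Fin m × Fin m) ℂ :=
  fun r c => if r.1 = c.2 ∧ r.2 = c.1 then 1 else 0

/-- The operator `Q = P^{t₁} = Σ_{i,j} E_{j̄ī} ⊗ E_{ji}` (all signs `θ_i`
trivialize in the `so(m)` case). -/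
noncomputable def Qm (m : ℕ) : Matrix (Fin m × Fin m) (Fin m × Fin m) ℂ :=
  fun r c => if r.1 = barso m r.2 ∧ c.1 = barso m c.2 then 1 else 0

/-- The rational `so(m)` R matrix `R(u) = I + P/u − Q/(u+κ)`. -/
noncomputable def Rmat (m : ℕ) (κ u : ℂ) :
    Matrix (Fin m × Fin m) (Fin m × Fin m) ℂ :=
  1 + u⁻¹ • Pm m - (u + κ)⁻¹ • Qm m

/-- The diagonal matrix of solution D3 for `so(m)`: `k_i(u) = k_ī(u) = 1` for
`i ∈ {1,…,m₁}` and `k_i(u) = (1+cu)/(1−cu)` for the remaining indices. -/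
noncomputable def KD3 (m m1 : ℕ) (c u : ℂ) : Matrix (Fin m) (Fin m) ℂ :=
  Matrix.diagonal fun i =>
    if (i : ℕ) < m1 ∨ m - m1 ≤ (i : ℕ) then 1 else (1 + c * u) / (1 - c * u)

set_option linter.unusedSimpArgs false in
/-- The reflection equation in an abstract algebra with Brauer-type relations. -/
theorem abstract_refl {A : Type*} [Ring A] [Algebra ℂ A] (P Q S T : A) (m t κ c u v : ℂ)
    (PP : P * P = 1) (PQ : P * Q = Q) (QP : Q * P = Q) (QQ : Q * Q = m • Q)
    (PS : P * S = T * P) (PT : P * T = S * P) (QT : Q * T = Q * S) (TQ : T * Q = S * Q)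
    (SS : S * S = 1) (TT : T * T = 1) (TS : T * S = S * T) (QSQ : Q * (S * Q) = t • Q)
    (hκ : 2 * κ = m - 2) (hct : c * (c * t + 4) = 0)
    (h1 : u - v ≠ 0) (h2 : u + v ≠ 0) (h3 : u - v + κ ≠ 0) (h4 : u + v + κ ≠ 0) :
    (1 + (u - v)⁻¹ • P - (u - v + κ)⁻¹ • Q) * (1 - (c * u) • S) *
      (1 + (u + v)⁻¹ • P - (u + v + κ)⁻¹ • Q) * (1 - (c * v) • T) =
    (1 - (c * v) • T) * (1 + (u + v)⁻¹ • P - (u + v + κ)⁻¹ • Q) * (1 - (c * u) • S) *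
      (1 + (u - v)⁻¹ • P - (u - v + κ)⁻¹ • Q) := by
  have PP' : ∀ x, P * (P * x) = x := fun x => by rw [← mul_assoc, PP, one_mul]
  have PQ' : ∀ x, P * (Q * x) = Q * x := fun x => by rw [← mul_assoc, PQ]
  have QP' : ∀ x, Q * (P * x) = Q * x := fun x => by rw [← mul_assoc, QP]
  have QQ' : ∀ x, Q * (Q * x) = m • (Q * x) := fun x => by
    rw [← mul_assoc, QQ, smul_mul_assoc]
  have PS' : ∀ x, P * (S * x) = T * (P * x) := fun x => by rw [← mul_assoc, PS, mul_assoc]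
  have PT' : ∀ x, P * (T * x) = S * (P * x) := fun x => by rw [← mul_assoc, PT, mul_assoc]
  have QT' : ∀ x, Q * (T * x) = Q * (S * x) := fun x => by
    rw [← mul_assoc, QT, mul_assoc]
  have TQ' : ∀ x, T * (Q * x) = S * (Q * x) := fun x => by
    rw [← mul_assoc, TQ, mul_assoc]
  have SS' : ∀ x, S * (S * x) = x := fun x => by rw [← mul_assoc, SS, one_mul]
  have TT' : ∀ x, T * (T * x) = x := fun x => by rw [← mul_assoc, TT, one_mul]
  have TS' : ∀ x, T * (S * x) = S * (T * x) := fun x => by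
    rw [← mul_assoc, TS, mul_assoc]
  have QSQ' : ∀ x, Q * (S * (Q * x)) = t • (Q * x) := fun x => by
    rw [← mul_assoc S, ← mul_assoc, QSQ, smul_mul_assoc]
  have QST : Q * (S * T) = Q := by rw [← TS, QT', SS, mul_one]
  have QSP : Q * (S * P) = Q * S := by rw [← PT, QP', QT]
  obtain rfl : m = 2 * κ + 2 := by linear_combination -hκ
  simp only [mul_add, add_mul, mul_sub, sub_mul, mul_one, one_mul, smul_mul_assoc,
    mul_smul_comm, mul_assoc, PP, PQ, QP, QQ, PS, PT, QT, TQ, SS, TT, TS, QSQ, PP', PQ', QP',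
    QQ', PS', PT', QT', TQ', SS', TT', TS', QSQ', QST, QSP]
  match_scalars
  all_goals field_simp
  all_goals first
    | linear_combination (u ^ 3 * v - u * v ^ 3) * hct
    | linear_combination -(u ^ 3 * v - u * v ^ 3) * hct
    | ring

/-- The signs of the two blocks. -/
noncomputable def sgn (m m1 : ℕ) (i : Fin m) : ℂ :=
  if (i : ℕ) < m1 ∨ m - m1 ≤ (i : ℕ) then 1 else -1

theorem sgn_sq (m m1 : ℕ) (i : Fin m) : sgn m m1 i * sgn m m1 i = 1 := by
  unfold sgn; split_ifs <;> norm_num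

theorem sgn_bar (m m1 : ℕ) (i : Fin m) : sgn m m1 (barso m i) = sgn m m1 i := by
  have := i.isLt
  unfold sgn barso
  congr 1
  simp only [eq_iff_iff]
  omega

theorem barso_barso (m : ℕ) (i : Fin m) : barso m (barso m i) = i := by
  have := i.isLt
  ext
  simp only [barso]
  omega

theorem sgn_sum (m m1 : ℕ) (h : 2 * m1 ≤ m) : ∑ i, sgn m m1 i = 4 * (m1 : ℂ) - m := by
  obtain ⟨k, rfl⟩ : ∃ k, m = m1 + k + m1 := ⟨m - 2 * m1, by omega⟩
  unfold sgn
  rw [Fin.sum_univ_eq_sum_range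
    (fun i : ℕ => if i < m1 ∨ m1 + k + m1 - m1 ≤ i then (1 : ℂ) else -1) (m1 + k + m1)]
  rw [Finset.sum_range_add, Finset.sum_range_add]
  have e1 : ∀ x ∈ Finset.range m1,
      (if x < m1 ∨ m1 + k + m1 - m1 ≤ x then (1 : ℂ) else -1) = 1 := by
    intro x hx
    rw [Finset.mem_range] at hx
    exact if_pos (by omega)
  have e2 : ∀ x ∈ Finset.range k,
      (if m1 + x < m1 ∨ m1 + k + m1 - m1 ≤ m1 + x then (1 : ℂ) else -1) = -1 := by
    intro x hx
    rw [Finset.mem_range] at hx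
    exact if_neg (by omega)
  have e3 : ∀ x ∈ Finset.range m1,
      (if m1 + k + x < m1 ∨ m1 + k + m1 - m1 ≤ m1 + k + x then (1 : ℂ) else -1) = 1 := by
    intro x hx
    exact if_pos (by omega)
  rw [Finset.sum_congr rfl e1, Finset.sum_congr rfl e2, Finset.sum_congr rfl e3]
  simp
  ring

theorem Pm_mul (m : ℕ) (M : Matrix (Fin m × Fin m) (Fin m × Fin m) ℂ) (r c) :
    (Pm m * M) r c = M r.swap c := by
  rw [Matrix.mul_apply, Finset.sum_eq_single r.swap]
  · simp [Pm]
  · intro b _ hb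
    have : ¬ (r.1 = b.2 ∧ r.2 = b.1) := fun h => hb (Prod.ext h.2.symm h.1.symm)
    simp [Pm, this]
  · simp

theorem mul_Pm (m : ℕ) (M : Matrix (Fin m × Fin m) (Fin m × Fin m) ℂ) (r c) :
    (M * Pm m) r c = M r c.swap := by
  rw [Matrix.mul_apply, Finset.sum_eq_single c.swap]
  · simp [Pm]
  · intro b _ hb
    have : ¬ (b.1 = c.2 ∧ b.2 = c.1) := fun h => hb (Prod.ext h.1 h.2)
    simp [Pm, this]
  · simp

theorem bar_swap (m : ℕ) (i j : Fin m) : i = barso m j ↔ j = barso m i :=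
  ⟨fun h => by rw [h, barso_barso], fun h => by rw [h, barso_barso]⟩

/-- Contraction of `Q D Q` for diagonal `D` acting on the second factor. -/
theorem Q_diag_Q (m : ℕ) (d : Fin m → ℂ) :
    Qm m * (Matrix.diagonal (fun r : Fin m × Fin m => d r.2) * Qm m) = (∑ i, d i) • Qm m := by
  ext r c
  rw [Matrix.mul_apply, Matrix.smul_apply, smul_eq_mul]
  simp only [Matrix.diagonal_mul]
  rw [Fintype.sum_prod_type_right, Finset.sum_mul]
  refine Finset.sum_congr rfl fun i _ => ?_
  rw [Finset.sum_eq_single (barso m i)]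
  · simp only [Qm]
    by_cases h : r.1 = barso m r.2 <;> by_cases h' : c.1 = barso m c.2 <;> simp [h, h']
  · intro b _ hb
    simp [Qm, hb]
  · simp

theorem kron_left (m m1 : ℕ) (c u : ℂ) (h : 1 - c * u ≠ 0) :
    kron (KD3 m m1 c u) 1 = (1 - c * u)⁻¹ •
      (1 - (c * u) • Matrix.diagonal (fun r : Fin m × Fin m => sgn m m1 r.1)) := by
  ext ⟨i, j⟩ ⟨k, l⟩
  by_cases h1 : i = k <;> by_cases h2 : j = l <;>
    simp [kron, KD3, Matrix.one_apply, Matrix.diagonal_apply, h1, h2, sgn]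
  split_ifs <;> field_simp
  ring

theorem kron_right (m m1 : ℕ) (c u : ℂ) (h : 1 - c * u ≠ 0) :
    kron 1 (KD3 m m1 c u) = (1 - c * u)⁻¹ •
      (1 - (c * u) • Matrix.diagonal (fun r : Fin m × Fin m => sgn m m1 r.2)) := by
  ext ⟨i, j⟩ ⟨k, l⟩
  by_cases h1 : i = k <;> by_cases h2 : j = l <;>
    simp [kron, KD3, Matrix.one_apply, Matrix.diagonal_apply, h1, h2, sgn]
  split_ifs <;> field_simp
  ring

/-- Solution D3 for `so(m)`: with `0 ≤ m₁`, `2m₁ ≤ m`, `2κ = m − 2` and the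
fixed value `c = 2/(κ − (2m₁ − 1))`, the matrix `KD3` solves the reflection
equation (as an identity of rational functions in `u, v`). -/
theorem D3_solves (m m1 : ℕ) (hm1 : 2 * m1 ≤ m) (κ : ℂ)
    (hκ : 2 * κ = (m : ℂ) - 2)
    (c : ℂ) (hc : c = 2 / (κ - (2 * (m1 : ℂ) - 1)))
    (u v : ℂ) (h1 : u ≠ v) (h2 : u + v ≠ 0)
    (h3 : u - v + κ ≠ 0) (h4 : u + v + κ ≠ 0)
    (h5 : 1 - c * u ≠ 0) (h6 : 1 - c * v ≠ 0) :
    Rmat m κ (u - v) * kron (KD3 m m1 c u) 1 * Rmat m κ (u + v) *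
        kron 1 (KD3 m m1 c v)
      = kron 1 (KD3 m m1 c v) * Rmat m κ (u + v) * kron (KD3 m m1 c u) 1 *
          Rmat m κ (u - v) := by
  rw [kron_left m m1 c u h5, kron_right m m1 c v h6]
  simp only [smul_mul_assoc, mul_smul_comm]
  rw [smul_comm]
  congr 2
  have sQ : ∀ r : Fin m × Fin m, r.1 = barso m r.2 → sgn m m1 r.2 = sgn m m1 r.1 :=
    fun r h => by rw [h, sgn_bar]
  have TQ : Matrix.diagonal (fun r : Fin m × Fin m => sgn m m1 r.2) * Qm m =
      Matrix.diagonal (fun r : Fin m × Fin m => sgn m m1 r.1) * Qm m := by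
    ext r s
    simp only [Matrix.diagonal_mul, Qm]
    by_cases h : r.1 = barso m r.2
    · rw [sQ r h]
    · simp [h]
  refine abstract_refl (Pm m) (Qm m) _ _ (m : ℂ) (4 * (m1 : ℂ) - m) κ c u v
    ?_ ?_ ?_ ?_ ?_ ?_ ?_ TQ ?_ ?_ ?_ ?_ hκ ?_ (sub_ne_zero.2 h1) h2 h3 h4
  · ext r s
    rw [Pm_mul]
    simp only [Pm, Matrix.one_apply, Prod.ext_iff, Prod.fst_swap, Prod.snd_swap]
    simp only [and_comm]
  · ext r s
    rw [Pm_mul]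
    simp only [Qm, Prod.fst_swap, Prod.snd_swap, bar_swap m r.2 r.1]
  · ext r s
    rw [mul_Pm]
    simp only [Qm, Prod.fst_swap, Prod.snd_swap, bar_swap m s.2 s.1]
  · have := Q_diag_Q m (fun _ => 1)
    simpa using this
  · ext r s
    rw [Pm_mul, Matrix.diagonal_mul, Matrix.diagonal_apply]
    by_cases h : r.swap = s
    · subst h; simp [Pm]
    · have : ¬ (r.1 = s.2 ∧ r.2 = s.1) := fun h' => h (Prod.ext h'.2 h'.1)
      simp [Pm, this, h]
  · ext r s
    rw [Pm_mul, Matrix.diagonal_mul, Matrix.diagonal_apply]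
    by_cases h : r.swap = s
    · subst h; simp [Pm]
    · have : ¬ (r.1 = s.2 ∧ r.2 = s.1) := fun h' => h (Prod.ext h'.2 h'.1)
      simp [Pm, this, h]
  · ext r s
    simp only [Matrix.mul_diagonal, Qm]
    by_cases h : s.1 = barso m s.2
    · rw [sQ s h]
    · simp [h]
  · simp [Matrix.diagonal_mul_diagonal, sgn_sq]
  · simp [Matrix.diagonal_mul_diagonal, sgn_sq]
  · simp [Matrix.diagonal_mul_diagonal, mul_comm]
  · rw [← TQ, Q_diag_Q, sgn_sum m m1 hm1]
  · obtain hm : (m : ℂ) = 2 * κ + 2 := by linear_combination -hκ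
    rw [hm]
    by_cases h0 : κ - (2 * (m1 : ℂ) - 1) = 0
    · rw [h0, div_zero] at hc
      rw [hc, zero_mul]
    · have : c * (κ - (2 * (m1 : ℂ) - 1)) = 2 := by rw [hc]; field_simp
      linear_combination -2 * c * this

end RefClass12
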